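/- arXiv:1109.3323 — 4 statements merged into one kernel-verified Lean document; each statement's English description precedes it below -/
import Mathlib

section
/- Let a, b be real numbers with a ≤ b and let c > 0. Then sup over τ ∈ [0,1) of ((1−τ)·a + τ·b + c·ln(1−τ)) is at least b − c·(1 + max(0, ln((b−a)/c))). -/
/-- Let `a ≤ b` and `c > 0`. Then the supremum over `τ ∈ [0,1)` of
`(1−τ)·a + τ·b + c·ln(1−τ)` is at least `b − c·(1 + max(0, ln((b−a)/c)))`. -/
theorem stmt_3 (a b c : ℝ) (hab : a ≤ b) (hc : 0 < c) :
    b - c * (1 + max 0 (Real.log ((b - a) / c))) ≤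
      sSup ((fun τ : ℝ => (1 - τ) * a + τ * b + c * Real.log (1 - τ)) '' Set.Ico (0 : ℝ) 1) := by
  have hbdd : BddAbove
      ((fun τ : ℝ => (1 - τ) * a + τ * b + c * Real.log (1 - τ)) '' Set.Ico (0 : ℝ) 1) := by
    refine ⟨b, ?_⟩
    rintro _ ⟨τ, ⟨h0, h1⟩, rfl⟩
    have hlog : Real.log (1 - τ) ≤ 0 := Real.log_nonpos (by linarith) (by linarith)
    have hclog : c * Real.log (1 - τ) ≤ 0 := mul_nonpos_of_nonneg_of_nonpos hc.le hlog
    have hgap : 0 ≤ (1 - τ) * (b - a) := mul_nonneg (by linarith) (by linarith)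
    dsimp only
    linarith
  rcases le_or_gt (b - a) c with h | h
  · refine le_csSup_of_le hbdd ⟨0, by simp, rfl⟩ ?_
    have hmax : 0 ≤ c * max 0 (Real.log ((b - a) / c)) := mul_nonneg hc.le (le_max_left _ _)
    simp only [sub_zero, Real.log_one]
    linarith
  · have hpos : 0 < b - a := hc.trans h
    have hdiv : 0 < c / (b - a) := div_pos hc hpos
    have hdiv_le : c / (b - a) ≤ 1 := (div_le_one hpos).2 h.le
    refine le_csSup_of_le hbdd
      ⟨1 - c / (b - a), ⟨by linarith, by linarith⟩, rfl⟩ ?_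
    have hmax : c * Real.log ((b - a) / c) ≤ c * max 0 (Real.log ((b - a) / c)) :=
      mul_le_mul_of_nonneg_left (le_max_right _ _) hc.le
    have hlog : Real.log (c / (b - a)) = -Real.log ((b - a) / c) := by
      rw [← Real.log_inv, inv_div]
    have hcancel : c / (b - a) * (b - a) = c := div_mul_cancel₀ c hpos.ne'
    simp only [sub_sub_cancel, hlog]
    linarith
end

section
/- Let H be an n×n real symmetric positive definite matrix and A an m×n real matrix with full row rank (its rows are linearly independent). Then A H⁻¹ Aᵀ is symmetric positive definite, and Aᵀ (A H⁻¹ Aᵀ)⁻¹ A ⪯ H in the Loewner order. -/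
open Matrix

/-- Let `H` be an `n×n` real symmetric positive definite matrix and `A` an `m×n`
real matrix with full row rank (its rows are linearly independent). Then
`A H⁻¹ Aᵀ` is symmetric positive definite, and `Aᵀ (A H⁻¹ Aᵀ)⁻¹ A ⪯ H` in the
Loewner order. -/
theorem stmt_7 {n m : ℕ} (H : Matrix (Fin n) (Fin n) ℝ) (A : Matrix (Fin m) (Fin n) ℝ)
    (hHsym : H.IsSymm) (hH : H.PosDef)
    (hA : LinearIndependent ℝ (fun i : Fin m => A i)) :
    (A * H⁻¹ * Aᵀ).IsSymm ∧ (A * H⁻¹ * Aᵀ).PosDef ∧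
    (H - Aᵀ * (A * H⁻¹ * Aᵀ)⁻¹ * A).PosSemidef := by
  have hS : (A * H⁻¹ * Aᵀ).PosDef := by
    rw [← conjTranspose_eq_transpose_of_trivial]
    exact hH.inv.mul_mul_conjTranspose_same (vecMul_injective_iff.mpr hA)
  refine ⟨?_, hS, ?_⟩
  · simp [IsSymm, transpose_mul, transpose_nonsing_inv, hHsym.eq, Matrix.mul_assoc]
  · -- Both Schur complements of the block matrix `[A H⁻¹ Aᵀ, A; Aᵀ, H]` are
    -- positive semidefinite together, and the one with respect to `H` vanishes.
    have := hS.isUnit.invertible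
    have := hH.isUnit.invertible
    have hblock : (fromBlocks (A * H⁻¹ * Aᵀ) A Aᴴ H).PosSemidef := by
      rw [hH.fromBlocks₂₂, conjTranspose_eq_transpose_of_trivial, sub_self]
      exact PosSemidef.zero
    simpa only [conjTranspose_eq_transpose_of_trivial] using (hS.fromBlocks₁₁ A H).mp hblock
end

section
/- Let 0 ≤ δ < 1 and β > 0 satisfy β < 1 − δ and (1−δ)β ≥ 2δ. Define p := δ·((1−δ)^{−2} + 2(1−δ)^{−1}), q := (1−δ)β − 2δ, and θ := (√(p² + 4q) − p)/2. Then θ·(1 − δ − β) > β if and only if −2δ(1−δ)² + (1−δ)((1+δ)² − p)·β + (p − 3 + 2δ − 2δ²)·β² + (1−δ)·β³ > 0. -/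
/-- The root `(√(p² + 4q) - p) / 2` of `t² + p t = q` exceeds `b / r` exactly when
`b / r` makes `t² + p t - q` negative. -/
theorem lt_quadratic_root_mul_iff {p q b r : ℝ} (hp : 0 ≤ p) (hb : 0 ≤ b) (hr : 0 < r) :
    b < (√(p ^ 2 + 4 * q) - p) / 2 * r ↔ b ^ 2 + p * b * r < q * r ^ 2 := by
  have hx : 0 ≤ 2 * b + p * r := by positivity
  have hsqrt : √(p ^ 2 + 4 * q) * r = √((p ^ 2 + 4 * q) * r ^ 2) := by
    rw [Real.sqrt_mul' _ (sq_nonneg r), Real.sqrt_sq hr.le]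
  calc b < (√(p ^ 2 + 4 * q) - p) / 2 * r
      ↔ 2 * b + p * r < √(p ^ 2 + 4 * q) * r := by constructor <;> intro h <;> linarith
    _ ↔ (2 * b + p * r) ^ 2 < (p ^ 2 + 4 * q) * r ^ 2 := by rw [hsqrt, Real.lt_sqrt hx]
    _ ↔ b ^ 2 + p * b * r < q * r ^ 2 := by constructor <;> intro h <;> linarith

/-- Let `0 ≤ δ < 1` and `β > 0` satisfy `β < 1 − δ` and `(1−δ)β ≥ 2δ`. Define
`p := δ·((1−δ)⁻² + 2(1−δ)⁻¹)`, `q := (1−δ)β − 2δ`, and `θ := (√(p² + 4q) − p)/2`.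
Then `θ·(1 − δ − β) > β` if and only if
`−2δ(1−δ)² + (1−δ)((1+δ)² − p)·β + (p − 3 + 2δ − 2δ²)·β² + (1−δ)·β³ > 0`. -/
theorem stmt_12 (δ β : ℝ) (hδ0 : 0 ≤ δ) (hδ1 : δ < 1) (hβ0 : 0 < β)
    (hβ1 : β < 1 - δ) (hq : 2 * δ ≤ (1 - δ) * β) :
    (Real.sqrt ((δ * ((1 - δ)⁻¹ ^ 2 + 2 * (1 - δ)⁻¹)) ^ 2 + 4 * ((1 - δ) * β - 2 * δ))
        - δ * ((1 - δ)⁻¹ ^ 2 + 2 * (1 - δ)⁻¹)) / 2 * (1 - δ - β) > β ↔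
      -2 * δ * (1 - δ) ^ 2
        + (1 - δ) * ((1 + δ) ^ 2 - δ * ((1 - δ)⁻¹ ^ 2 + 2 * (1 - δ)⁻¹)) * β
        + (δ * ((1 - δ)⁻¹ ^ 2 + 2 * (1 - δ)⁻¹) - 3 + 2 * δ - 2 * δ ^ 2) * β ^ 2
        + (1 - δ) * β ^ 3 > 0 := by
  have hs : 0 < 1 - δ := by linarith
  have hp : 0 ≤ δ * ((1 - δ)⁻¹ ^ 2 + 2 * (1 - δ)⁻¹) := by positivity
  generalize δ * ((1 - δ)⁻¹ ^ 2 + 2 * (1 - δ)⁻¹) = p at hp ⊢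
  rw [gt_iff_lt, lt_quadratic_root_mul_iff hp hβ0.le (sub_pos.2 hβ1)]
  constructor <;> intro h <;> linarith
end

section
/- Let 0 < β < (3−√5)/2 and set Δ̄ := √β·(1 − √β − β)/(1 + 2√β). Then Δ̄ > 0, and for all λ and Δ with 0 ≤ λ ≤ β and 0 ≤ Δ ≤ Δ̄, one has 1 − 2Δ − λ > 0 and ((λ + Δ)/(1 − 2Δ − λ))² ≤ β. -/
/-- Let `0 < β < (3−√5)/2` and set `Δ̄ := √β·(1 − √β − β)/(1 + 2√β)`. Then
`Δ̄ > 0`, and for all `λ` and `Δ` with `0 ≤ λ ≤ β` and `0 ≤ Δ ≤ Δ̄`, one has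
`1 − 2Δ − λ > 0` and `((λ + Δ)/(1 − 2Δ − λ))² ≤ β`. -/
theorem stmt_14 (β : ℝ) (hβ0 : 0 < β) (hβ1 : β < (3 - Real.sqrt 5) / 2) :
    0 < Real.sqrt β * (1 - Real.sqrt β - β) / (1 + 2 * Real.sqrt β) ∧
    ∀ lam Δ : ℝ, 0 ≤ lam → lam ≤ β → 0 ≤ Δ →
      Δ ≤ Real.sqrt β * (1 - Real.sqrt β - β) / (1 + 2 * Real.sqrt β) →
      0 < 1 - 2 * Δ - lam ∧ ((lam + Δ) / (1 - 2 * Δ - lam)) ^ 2 ≤ β := by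
  obtain ⟨s, hs, rfl⟩ : ∃ s : ℝ, 0 < s ∧ s ^ 2 = β :=
    ⟨√β, Real.sqrt_pos.2 hβ0, Real.sq_sqrt hβ0.le⟩
  rw [Real.sqrt_sq hs.le]
  have h5 : √5 ^ 2 = (5 : ℝ) := Real.sq_sqrt (by norm_num)
  have h5' : (1 : ℝ) < √5 := Real.lt_sqrt_of_sq_lt (by norm_num)
  have hsg : s < (√5 - 1) / 2 := lt_of_pow_lt_pow_left₀ 2 (by linarith) (by nlinarith)
  have hpos : 0 < 1 - s - s ^ 2 := by linarith
  refine ⟨by positivity, fun lam Δ hl hlβ hΔ hΔs => ?_⟩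
  rw [le_div_iff₀ (by positivity)] at hΔs
  have hle : lam + Δ ≤ s * (1 - 2 * Δ - lam) := by
    linarith [mul_le_mul_of_nonneg_left hlβ (by positivity : 0 ≤ 1 + s)]
  have hden : 0 < 1 - 2 * Δ - lam := by
    by_contra! h
    linarith [mul_nonpos_of_nonneg_of_nonpos hs.le h]
  refine ⟨hden, pow_le_pow_left₀ (by positivity) ?_ 2⟩
  rwa [div_le_iff₀ hden]
end
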